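/- For every τ in the complex upper half-plane, the values x = c(τ) and y = c(3τ) satisfy g(x,y) = 0, where g(x,y) = x³(4y² + 2y + 1) − y(y² − y + 1); equivalently c(τ)³ = c(3τ)·(1 − c(3τ) + c(3τ)²)/(1 + 2c(3τ) + 4c(3τ)²). -/

import Mathlib

open Complex

/-- The nome `q = exp(2πiτ)`. -/
noncomputable def nome (τ : ℂ) : ℂ := Complex.exp (2 * Real.pi * I * τ)

/-- Ramanujan's cubic continued fraction, as an infinite product:
`c(τ) = q^{1/3} ∏_{n≥1} (1-q^{6n-1})(1-q^{6n-5})/(1-q^{6n-3})²`. -/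
noncomputable def c (τ : ℂ) : ℂ :=
  Complex.exp (2 * Real.pi * I * τ / 3) *
    ∏' n : ℕ,
      ((1 - nome τ ^ (6 * (n + 1) - 1)) * (1 - nome τ ^ (6 * (n + 1) - 5)) /
        (1 - nome τ ^ (6 * (n + 1) - 3)) ^ 2)

/-!
Write `φ(x) = ∑ (-1) ^ m x ^ (m ^ 2)` and `x = q ^ (1 / 3)`. Splitting the series by the residue of
`m` modulo `3` and applying the Jacobi triple product to each part gives
`φ(x) = φ(x ^ 9) (1 - 2 c(τ))`. Since `φ` is an eta quotient, its product over the three cube-root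
rotations of `x` is again expressed through `φ`, namely `φ(x ^ 3) ^ 4 / φ(x ^ 9)`, while `c(τ)` is
merely multiplied by cube roots of unity; hence `φ(x ^ 3) ^ 4 = φ(x ^ 9) ^ 4 (1 - 8 c(τ) ^ 3)`.
Evaluating these identities at `x` and at `x ^ 3` and eliminating `φ` leaves
`(1 - 2 v) ^ 4 = (1 - 8 u ^ 3) (1 - 8 v ^ 3)` with `u = c(τ)` and `v = c(3τ)`, and the theorem
follows on cancelling `1 - 2 v`.
-/

open Filter Finset Topology

/-- The finite `q`-Pochhammer symbol `(a; q)_n`. -/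
def qPochhammer {R : Type*} [CommRing R] (a q : R) (n : ℕ) : R :=
  ∏ i ∈ range n, (1 - a * q ^ i)

/-- The Gaussian binomial coefficient `[n choose k]_q`, defined by the `q`-Pascal recurrence so that
it makes sense in every commutative semiring, even at roots of unity. -/
def gaussBinom {R : Type*} [CommSemiring R] (q : R) : ℕ → ℕ → R
  | _, 0 => 1
  | 0, _ + 1 => 0
  | n + 1, k + 1 => gaussBinom q n k + q ^ (k + 1) * gaussBinom q n (k + 1)

section GaussBinom

variable {R : Type*}

@[simp]
lemma gaussBinom_zero_right [CommSemiring R] (q : R) (n : ℕ) : gaussBinom q n 0 = 1 := by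
  cases n <;> rfl

lemma gaussBinom_succ_succ [CommSemiring R] (q : R) (n k : ℕ) :
    gaussBinom q (n + 1) (k + 1) =
      gaussBinom q n k + q ^ (k + 1) * gaussBinom q n (k + 1) :=
  rfl

lemma gaussBinom_eq_zero_of_lt [CommSemiring R] (q : R) {n k : ℕ} (h : n < k) :
    gaussBinom q n k = 0 := by
  induction n generalizing k with
  | zero => obtain ⟨k, rfl⟩ := Nat.exists_eq_succ_of_ne_zero h.ne'; rfl
  | succ n ih =>
    obtain ⟨k, rfl⟩ := Nat.exists_eq_succ_of_ne_zero (Nat.ne_zero_of_lt h)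
    rw [Nat.succ_eq_add_one, gaussBinom_succ_succ, ih (by lia), ih (by lia), mul_zero, add_zero]

lemma sum_gaussBinom_succ_mul [CommSemiring R] (q : R) (n : ℕ) (f : ℕ → R) :
    ∑ k ∈ range (n + 2), gaussBinom q (n + 1) k * f k =
      ∑ k ∈ range (n + 1), gaussBinom q n k * (f (k + 1) + q ^ k * f k) := by
  have hshift : ∑ k ∈ range (n + 1), gaussBinom q n k * (q ^ k * f k) =
      ∑ k ∈ range (n + 1), gaussBinom q n (k + 1) * (q ^ (k + 1) * f (k + 1)) + f 0 := by
    rw [sum_range_succ', sum_range_succ _ n, gaussBinom_eq_zero_of_lt q n.lt_succ_self]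
    simp
  simp_rw [mul_add]
  rw [sum_range_succ', sum_add_distrib, hshift, ← add_assoc, ← sum_add_distrib]
  simp only [gaussBinom_succ_succ, gaussBinom_zero_right, one_mul]
  congr 1
  exact sum_congr rfl fun k _ => by ring

theorem prod_one_add_mul_pow_eq_sum_gaussBinom [CommSemiring R] (q z : R) (n : ℕ) :
    ∏ i ∈ range n, (1 + z * q ^ i) =
      ∑ k ∈ range (n + 1), gaussBinom q n k * (q ^ k.choose 2 * z ^ k) := by
  induction n generalizing z with
  | zero => simp
  | succ n ih =>
    rw [prod_range_succ', sum_gaussBinom_succ_mul]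
    simp_rw [pow_succ' q, ← mul_assoc z q]
    rw [ih, sum_mul]
    refine sum_congr rfl fun k _ => ?_
    rw [Nat.choose_succ_succ', Nat.choose_one_right]
    ring

variable [CommRing R]

lemma qPochhammer_succ (a q : R) (n : ℕ) :
    qPochhammer a q (n + 1) = qPochhammer a q n * (1 - a * q ^ n) :=
  prod_range_succ _ n

theorem gaussBinom_add_mul_qPochhammer_mul_qPochhammer (q : R) (m k : ℕ) :
    gaussBinom q (m + k) k * (qPochhammer q q m * qPochhammer q q k) =
      qPochhammer q q (m + k) := by
  induction m generalizing k with
  | zero =>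
    induction k with
    | zero => simp [qPochhammer]
    | succ k ih =>
      rw [zero_add] at ih ⊢
      rw [gaussBinom_succ_succ, gaussBinom_eq_zero_of_lt q k.lt_succ_self, qPochhammer_succ]
      linear_combination (1 - q * q ^ k) * ih
  | succ m ihm =>
    induction k with
    | zero => simp [qPochhammer]
    | succ k ihk =>
      have hm := ihm (k + 1)
      rw [show m + 1 + (k + 1) = m + (k + 1) + 1 by ring, gaussBinom_succ_succ,
        qPochhammer_succ q q (m + (k + 1))]
      rw [show m + 1 + k = m + (k + 1) by ring] at ihk
      rw [qPochhammer_succ] at ihk hm ⊢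
      rw [qPochhammer_succ] at *
      linear_combination (1 - q * q ^ k) * ihk + q ^ (k + 1) * (1 - q * q ^ m) * hm

end GaussBinom

theorem qPochhammer_mul_qPochhammer_inv_eq_sum {𝕜 : Type*} [Field 𝕜] {z Q : 𝕜} (hz : z ≠ 0)
    (hQ : Q ≠ 0) (M N : ℕ) :
    qPochhammer (-(z * Q)) (Q ^ 2) M * qPochhammer (-(z⁻¹ * Q)) (Q ^ 2) N =
      ∑ k ∈ range (M + N + 1),
        gaussBinom (Q ^ 2) (M + N) k * (z ^ (k - N : ℤ) * Q ^ ((k - N : ℤ) ^ 2)) := by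
  induction N with
  | zero =>
    have h := prod_one_add_mul_pow_eq_sum_gaussBinom (Q ^ 2) (z * Q) M
    simp only [qPochhammer, neg_mul, sub_neg_eq_add, range_zero, prod_empty, mul_one, h,
      add_zero]
    refine sum_congr rfl fun k _ => ?_
    have hexp : 2 * k.choose 2 + k = k ^ 2 := by
      rw [k.choose_two_right, Nat.mul_div_cancel' k.even_mul_pred_self.two_dvd]
      cases k with
      | zero => rfl
      | succ k => rw [Nat.add_sub_cancel]; ring
    rw [Nat.cast_zero, sub_zero, zpow_natCast, mul_pow, ← Nat.cast_pow, zpow_natCast, ← hexp,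
      pow_add, pow_mul, mul_left_comm (z ^ k)]
  | succ N ih =>
    rw [qPochhammer_succ, ← mul_assoc, ih, sum_mul, ← add_assoc, sum_gaussBinom_succ_mul]
    refine sum_congr rfl fun k _ => ?_
    have hz' : z ^ (k - N : ℤ) = z ^ (k - N - 1 : ℤ) * z := by
      rw [← zpow_add_one₀ hz, sub_add_cancel]
    have hexp : Q ^ ((k - N : ℤ) ^ 2) * Q ^ (2 * N + 1) =
        Q ^ (2 * k) * Q ^ ((k - N - 1 : ℤ) ^ 2) := by
      rw [← zpow_natCast, ← zpow_natCast, ← zpow_add₀ hQ, ← zpow_add₀ hQ]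
      push_cast
      ring_nf
    push_cast
    rw [show (k + 1 - (N + 1) : ℤ) = k - N by ring, show (k - (N + 1) : ℤ) = k - N - 1 by ring, hz']
    field_simp
    linear_combination gaussBinom (Q ^ 2) (M + N) k * hexp

/-- The infinite `q`-Pochhammer symbol `(a; q)_∞`. -/
noncomputable def qPochhammerInf {R : Type*} [CommRing R] [TopologicalSpace R] (a q : R) : R :=
  ∏' i : ℕ, (1 - a * q ^ i)

section QPochhammerInf

variable {𝕜 : Type*} [NormedField 𝕜] {a q : 𝕜}

lemma mul_pow_ne_one (ha : ‖a‖ < 1) (hq : ‖q‖ < 1) (i : ℕ) : a * q ^ i ≠ 1 := by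
  refine fun h => (norm_one (α := 𝕜)).not_lt ?_
  rw [← h, norm_mul, norm_pow]
  exact mul_lt_one_of_nonneg_of_lt_one_left (norm_nonneg a) ha
    (pow_le_one₀ (norm_nonneg q) hq.le)

lemma qPochhammer_ne_zero (ha : ‖a‖ < 1) (hq : ‖q‖ < 1) (n : ℕ) : qPochhammer a q n ≠ 0 :=
  prod_ne_zero_iff.mpr fun i _ => sub_ne_zero.mpr (mul_pow_ne_one ha hq i).symm

lemma summable_norm_neg_mul_pow (a : 𝕜) (hq : ‖q‖ < 1) :
    Summable fun i : ℕ => ‖-(a * q ^ i)‖ := by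
  simpa only [norm_neg, norm_mul] using
    (summable_norm_geometric_of_norm_lt_one hq).mul_left ‖a‖

lemma norm_pow_lt_one (hq : ‖q‖ < 1) {k : ℕ} (hk : k ≠ 0) : ‖q ^ k‖ < 1 := by
  rw [norm_pow]
  exact pow_lt_one₀ (norm_nonneg q) hq hk

lemma norm_pow_mul_of_isPrimitiveRoot {k : ℕ} {w : 𝕜} (hw : IsPrimitiveRoot w k) (hk : k ≠ 0)
    (j : ℕ) (x : 𝕜) : ‖w ^ j * x‖ = ‖x‖ := by
  have hfin : IsOfFinOrder w :=
    isOfFinOrder_iff_pow_eq_one.mpr ⟨k, Nat.pos_of_ne_zero hk, hw.pow_eq_one⟩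
  rw [norm_mul, norm_pow, hfin.norm_eq_one, one_pow, one_mul]

variable [CompleteSpace 𝕜]

lemma multipliable_one_sub_mul_pow (a : 𝕜) (hq : ‖q‖ < 1) :
    Multipliable fun i : ℕ => 1 - a * q ^ i := by
  simpa only [sub_eq_add_neg] using
    multipliable_one_add_of_summable (summable_norm_neg_mul_pow a hq)

lemma tendsto_qPochhammer (a : 𝕜) (hq : ‖q‖ < 1) :
    Tendsto (qPochhammer a q) atTop (𝓝 (qPochhammerInf a q)) :=
  (multipliable_one_sub_mul_pow a hq).hasProd.tendsto_prod_nat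

lemma qPochhammerInf_ne_zero (ha : ‖a‖ < 1) (hq : ‖q‖ < 1) : qPochhammerInf a q ≠ 0 := by
  simp only [qPochhammerInf, sub_eq_add_neg]
  refine tprod_one_add_ne_zero_of_summable (fun i => ?_) (summable_norm_neg_mul_pow a hq)
  rw [← sub_eq_add_neg]
  exact sub_ne_zero.mpr (mul_pow_ne_one ha hq i).symm

theorem qPochhammerInf_eq_prod_range (a : 𝕜) (hq : ‖q‖ < 1) {k : ℕ} (hk : k ≠ 0) :
    qPochhammerInf a q = ∏ r ∈ range k, qPochhammerInf (a * q ^ r) (q ^ k) := by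
  have : NeZero k := ⟨hk⟩
  let e : Fin k × ℕ ≃ ℕ := (Equiv.prodComm _ _).trans (Nat.divModEquiv k).symm
  have hprod := e.hasProd_iff.mpr (multipliable_one_sub_mul_pow a hq).hasProd
  rw [prod_range]
  refine (hprod.prod_fiberwise fun r => ?_).unique (hasProd_fintype _)
  convert! (multipliable_one_sub_mul_pow (a * q ^ (r : ℕ)) (norm_pow_lt_one hq hk)).hasProd
    using 3 with i
  change 1 - a * q ^ (i * k + r) = _
  ring

lemma prod_range_one_sub_pow_mul {R : Type*} [CommRing R] [IsDomain R] {k : ℕ} (hk : k ≠ 0)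
    {w : R} (hw : IsPrimitiveRoot w k) (a : R) : ∏ j ∈ range k, (1 - w ^ j * a) = 1 - a ^ k := by
  have h := congr_arg (Polynomial.eval 1)
    (X_pow_sub_C_eq_prod hw (Nat.pos_of_ne_zero hk) (α := a) rfl)
  simpa [Polynomial.eval_prod] using h.symm

theorem prod_range_qPochhammerInf_pow_mul {k : ℕ} (hk : k ≠ 0) {w : 𝕜}
    (hw : IsPrimitiveRoot w k) (a : 𝕜) (hq : ‖q‖ < 1) :
    ∏ j ∈ range k, qPochhammerInf (w ^ j * a) q = qPochhammerInf (a ^ k) (q ^ k) := by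
  unfold qPochhammerInf
  rw [← Multipliable.tprod_finsetProd fun j _ => multipliable_one_sub_mul_pow _ hq]
  simp_rw [mul_assoc, prod_range_one_sub_pow_mul hk hw, mul_pow, ← pow_mul, mul_comm k]

theorem prod_range_qPochhammerInf_rotation {p : ℕ} (hp : p.Prime) {w : 𝕜}
    (hw : IsPrimitiveRoot w p) {x : 𝕜} (hx : ‖x‖ < 1) :
    (∏ j ∈ range p, qPochhammerInf (w ^ j * x) (w ^ j * x)) *
        qPochhammerInf (x ^ p ^ 2) (x ^ p ^ 2) =
      qPochhammerInf (x ^ p) (x ^ p) ^ (p + 1) := by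
  have hxp := norm_pow_lt_one hx hp.ne_zero
  have hdissect (j : ℕ) : qPochhammerInf (w ^ j * x) (w ^ j * x) =
      ∏ r ∈ range p, qPochhammerInf ((w ^ (r + 1)) ^ j * x ^ (r + 1)) (x ^ p) := by
    rw [qPochhammerInf_eq_prod_range _
      (by rwa [norm_pow_mul_of_isPrimitiveRoot hw hp.ne_zero]) hp.ne_zero]
    refine prod_congr rfl fun r _ => ?_
    congr 1
    · ring
    · rw [mul_pow, ← pow_mul, mul_comm j, pow_mul, hw.pow_eq_one, one_pow, one_mul]
  obtain ⟨m, rfl⟩ := Nat.exists_eq_add_one_of_ne_zero hp.ne_zero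
  have hclass {r : ℕ} (hr : r ∈ range m) :
      ∏ j ∈ range (m + 1), qPochhammerInf ((w ^ (r + 1)) ^ j * x ^ (r + 1)) (x ^ (m + 1)) =
        qPochhammerInf (x ^ (m + 1) * (x ^ (m + 1)) ^ r) ((x ^ (m + 1)) ^ (m + 1)) := by
    have hcop : (r + 1).Coprime (m + 1) :=
      (Nat.coprime_of_lt_prime r.succ_ne_zero (by simpa using hr) hp).symm
    rw [prod_range_qPochhammerInf_pow_mul hp.ne_zero (hw.pow_of_coprime _ hcop) _ hxp,
      ← pow_mul, mul_comm (r + 1), pow_mul, pow_succ']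
  simp_rw [hdissect]
  rw [Finset.prod_comm, prod_range_succ, prod_congr rfl fun r => hclass, hw.pow_eq_one,
    sq (m + 1), pow_mul x]
  have hself := qPochhammerInf_eq_prod_range (x ^ (m + 1)) hxp hp.ne_zero
  rw [prod_range_succ, ← pow_succ'] at hself
  simp only [one_pow, one_mul, prod_const, card_range]
  linear_combination -qPochhammerInf (x ^ (m + 1)) (x ^ (m + 1)) ^ (m + 1) * hself

end QPochhammerInf

/-- The Jacobi theta series `∑_{m ∈ ℤ} z ^ m Q ^ (m ^ 2)` as a function of the multiplicative
variable `z` and of the nome `Q`. -/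
noncomputable def thetaSeries {𝕜 : Type*} [Field 𝕜] [TopologicalSpace 𝕜] (z Q : 𝕜) : 𝕜 :=
  ∑' m : ℤ, z ^ m * Q ^ (m ^ 2)

/-- The Gaussian binomial coefficient `[2N choose N + m]_q`, extended by zero to all
integers `m`. -/
def centralGaussBinom {R : Type*} [CommSemiring R] (q : R) (N : ℕ) (m : ℤ) : R :=
  if -N ≤ m then gaussBinom q (N + N) (N + m).toNat else 0

lemma tsum_centralGaussBinom_mul {R : Type*} [CommSemiring R] [TopologicalSpace R] [T2Space R]
    (q : R) (b : ℤ → R) (N : ℕ) :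
    ∑' m, centralGaussBinom q N m * b m =
      ∑ k ∈ range (N + N + 1), gaussBinom q (N + N) k * b (k - N) := by
  have hinj : Function.Injective fun k : ℕ => (k - N : ℤ) := fun k l h => by grind
  refine ((hinj.hasSum_iff fun m hm => ?_).mp ?_).tsum_eq
  · have hlt : ¬ -(N : ℤ) ≤ m := fun h => hm ⟨(N + m).toNat, by grind⟩
    rw [centralGaussBinom, if_neg hlt, zero_mul]
  · have hcomp : ((fun m => centralGaussBinom q N m * b m) ∘ fun k : ℕ => (k - N : ℤ)) =
        fun k => gaussBinom q (N + N) k * b (k - N) := by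
      ext k
      simp [centralGaussBinom]
    rw [hcomp]
    refine hasSum_sum_of_ne_finset_zero fun k hk => ?_
    rw [gaussBinom_eq_zero_of_lt q (by simpa using hk), zero_mul]

section JacobiTripleProduct

variable {𝕜 : Type*} [NormedField 𝕜] {q z Q : 𝕜}

lemma gaussBinom_add_eq_div (hq : ‖q‖ < 1) (m k : ℕ) :
    gaussBinom q (m + k) k =
      qPochhammer q q (m + k) / (qPochhammer q q m * qPochhammer q q k) :=
  eq_div_of_mul_eq (mul_ne_zero (qPochhammer_ne_zero hq hq m) (qPochhammer_ne_zero hq hq k))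
    (gaussBinom_add_mul_qPochhammer_mul_qPochhammer q m k)

lemma summable_norm_pow_mul_pow_sq (z : 𝕜) (hQ : ‖Q‖ < 1) :
    Summable fun n : ℕ => ‖z ^ n * Q ^ (n ^ 2)‖ := by
  have hratio : Tendsto (fun n : ℕ => ‖z * Q ^ (2 * n + 1)‖) atTop (𝓝 0) := by
    have hexp : Tendsto (fun n : ℕ => 2 * n + 1) atTop atTop :=
      tendsto_atTop_mono (fun n => show n ≤ 2 * n + 1 by lia) tendsto_id
    simpa using ((tendsto_pow_atTop_nhds_zero_of_norm_lt_one hQ).comp hexp).const_mul z |>.norm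
  refine summable_of_ratio_norm_eventually_le one_half_lt_one ?_
  filter_upwards [hratio.eventually_le_const one_half_pos] with n hn
  calc ‖‖z ^ (n + 1) * Q ^ ((n + 1) ^ 2)‖‖
      = ‖z * Q ^ (2 * n + 1)‖ * ‖‖z ^ n * Q ^ (n ^ 2)‖‖ := by
        rw [norm_norm, norm_norm, ← norm_mul]
        ring_nf
    _ ≤ 1 / 2 * ‖‖z ^ n * Q ^ (n ^ 2)‖‖ := by gcongr

lemma summable_norm_zpow_mul_zpow_sq (z : 𝕜) (hQ : ‖Q‖ < 1) :
    Summable fun m : ℤ => ‖z ^ m * Q ^ (m ^ 2)‖ := by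
  refine .of_nat_of_neg ?_ ?_
  · simpa only [← Nat.cast_pow, zpow_natCast] using summable_norm_pow_mul_pow_sq z hQ
  · simpa only [neg_sq, zpow_neg, ← Nat.cast_pow, zpow_natCast, inv_pow] using
      summable_norm_pow_mul_pow_sq z⁻¹ hQ

variable [CompleteSpace 𝕜]

lemma summable_thetaSeries (z : 𝕜) (hQ : ‖Q‖ < 1) :
    Summable fun m : ℤ => z ^ m * Q ^ (m ^ 2) :=
  (summable_norm_zpow_mul_zpow_sq z hQ).of_norm

lemma exists_norm_gaussBinom_le (hq : ‖q‖ < 1) : ∃ C, ∀ n k, ‖gaussBinom q n k‖ ≤ C := by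
  have hlim := tendsto_qPochhammer q hq
  obtain ⟨A, hA⟩ := hlim.norm.bddAbove_range
  obtain ⟨B, hB⟩ := (hlim.inv₀ (qPochhammerInf_ne_zero hq hq)).norm.bddAbove_range
  replace hA (n : ℕ) : ‖qPochhammer q q n‖ ≤ A := hA ⟨n, rfl⟩
  replace hB (n : ℕ) : ‖(qPochhammer q q n)⁻¹‖ ≤ B := hB ⟨n, rfl⟩
  have hA0 : 0 ≤ A := (norm_nonneg _).trans (hA 0)
  have hB0 : 0 ≤ B := (norm_nonneg _).trans (hB 0)
  refine ⟨A * (B * B), fun n k => ?_⟩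
  obtain h | h := lt_or_ge n k
  · rw [gaussBinom_eq_zero_of_lt q h, norm_zero]
    positivity
  · obtain ⟨m, rfl⟩ := Nat.exists_eq_add_of_le' h
    rw [gaussBinom_add_eq_div hq, div_eq_mul_inv, mul_inv, norm_mul, norm_mul]
    gcongr
    exacts [hA _, hB _, hB _]

lemma tendsto_centralGaussBinom (hq : ‖q‖ < 1) (m : ℤ) :
    Tendsto (centralGaussBinom q · m) atTop (𝓝 (qPochhammerInf q q)⁻¹) := by
  have hne := qPochhammerInf_ne_zero hq hq
  have hlim {f : ℕ → ℕ} (hf : ∀ N, N ≤ f N + m.natAbs) :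
      Tendsto (fun N => qPochhammer q q (f N)) atTop (𝓝 (qPochhammerInf q q)) :=
    (tendsto_qPochhammer q hq).comp <| tendsto_atTop.mpr fun b =>
      eventually_atTop.mpr ⟨b + m.natAbs, fun N hN => by have := hf N; lia⟩
  have hdiv := (hlim (f := fun N => N + N) fun N => by lia).div
    ((hlim (f := fun N => (N - m).toNat) fun N => by lia).mul
      (hlim (f := fun N => (N + m).toNat) fun N => by lia)) (mul_ne_zero hne hne)
  rw [div_mul_cancel_left₀ hne] at hdiv
  refine hdiv.congr' ?_
  filter_upwards [eventually_ge_atTop m.natAbs] with N hN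
  have hsplit : N + N = (N - m).toNat + (N + m).toNat := by lia
  rw [centralGaussBinom, if_pos (by lia)]
  simp only [Pi.div_apply, hsplit, gaussBinom_add_eq_div hq]

theorem tendsto_sum_gaussBinom_mul (hq : ‖q‖ < 1) {b : ℤ → 𝕜} (hb : Summable fun m => ‖b m‖) :
    Tendsto (fun N : ℕ => ∑ k ∈ range (N + N + 1), gaussBinom q (N + N) k * b (k - N)) atTop
      (𝓝 ((qPochhammerInf q q)⁻¹ * ∑' m, b m)) := by
  obtain ⟨C, hC⟩ := exists_norm_gaussBinom_le hq
  simp_rw [← tsum_centralGaussBinom_mul, ← tsum_mul_left]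
  refine tendsto_tsum_of_dominated_convergence (hb.mul_left C)
    (fun m => (tendsto_centralGaussBinom hq m).mul_const _) (.of_forall fun N m => ?_)
  rw [norm_mul]
  gcongr
  unfold centralGaussBinom
  split_ifs
  exacts [hC _ _, norm_zero.trans_le ((norm_nonneg _).trans (hC 0 0))]

theorem jacobi_triple_product (hz : z ≠ 0) (hQ : ‖Q‖ < 1) :
    thetaSeries z Q = qPochhammerInf (Q ^ 2) (Q ^ 2) *
      (qPochhammerInf (-(z * Q)) (Q ^ 2) * qPochhammerInf (-(z⁻¹ * Q)) (Q ^ 2)) := by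
  obtain rfl | hQ0 := eq_or_ne Q 0
  · have hterm (m : ℤ) (hm : m ≠ 0) : z ^ m * (0 : 𝕜) ^ m ^ 2 = 0 := by
      rw [zero_zpow _ (pow_ne_zero 2 hm), mul_zero]
    rw [thetaSeries, tsum_eq_single 0 hterm]
    simp [qPochhammerInf]
  · have hq := norm_pow_lt_one hQ two_ne_zero
    have hlim := tendsto_sum_gaussBinom_mul hq (summable_norm_zpow_mul_zpow_sq z hQ)
    simp_rw [← qPochhammer_mul_qPochhammer_inv_eq_sum hz hQ0] at hlim
    have huniq := tendsto_nhds_unique hlim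
      ((tendsto_qPochhammer _ hq).mul (tendsto_qPochhammer _ hq))
    rw [← huniq, mul_inv_cancel_left₀ (qPochhammerInf_ne_zero hq hq), thetaSeries]

end JacobiTripleProduct

section ThetaSeries

lemma thetaSeries_inv {𝕜 : Type*} [Field 𝕜] [TopologicalSpace 𝕜] (z Q : 𝕜) :
    thetaSeries z⁻¹ Q = thetaSeries z Q := by
  rw [thetaSeries, ← (Equiv.neg ℤ).tsum_eq]
  simp [thetaSeries]

variable {𝕜 : Type*} [NormedField 𝕜] {z Q : 𝕜}

lemma thetaSeries_mul_sq (hz : z ≠ 0) (hQ : Q ≠ 0) :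
    thetaSeries (z * Q ^ 2) Q = (z * Q)⁻¹ * thetaSeries z Q := by
  rw [thetaSeries, thetaSeries, ← (Equiv.addRight (1 : ℤ)).tsum_eq fun m => z ^ m * Q ^ (m ^ 2),
    ← tsum_mul_left]
  refine tsum_congr fun m => ?_
  rw [Equiv.coe_addRight, show (m + 1) ^ 2 = m ^ 2 + 2 * m + 1 by ring, zpow_add_one₀ hz,
    zpow_add_one₀ hQ, zpow_add₀ hQ, mul_zpow, zpow_mul]
  field_simp

variable [CompleteSpace 𝕜]

theorem thetaSeries_eq_sum_range (hz : z ≠ 0) (hQ0 : Q ≠ 0) (hQ : ‖Q‖ < 1) {k : ℕ}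
    (hk : k ≠ 0) :
    thetaSeries z Q = ∑ r ∈ range k,
      z ^ r * Q ^ (r ^ 2) * thetaSeries (z ^ k * Q ^ (2 * k * r)) (Q ^ (k ^ 2)) := by
  have : NeZero k := ⟨hk⟩
  let e : Fin k × ℤ ≃ ℤ := (Equiv.prodComm _ _).trans (Int.divModEquiv k).symm
  have hsum := e.hasSum_iff.mpr (summable_thetaSeries z hQ).hasSum
  rw [sum_range]
  refine (hsum.prod_fiberwise fun r => ?_).unique (hasSum_fintype _)
  convert! (summable_thetaSeries (z ^ k * Q ^ (2 * k * (r : ℕ)))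
    (norm_pow_lt_one hQ (pow_ne_zero 2 hk))).hasSum.mul_left (z ^ (r : ℕ) * Q ^ ((r : ℕ) ^ 2))
    using 2 with m
  have hz' : z ^ (m * k + r : ℤ) = z ^ (r : ℕ) * (z ^ k) ^ m := by
    rw [zpow_add₀ hz, mul_comm m, zpow_mul]
    norm_cast
    ring
  have hQ' : Q ^ ((m * k + r : ℤ) ^ 2) =
      Q ^ ((r : ℕ) ^ 2) * (Q ^ (2 * k * (r : ℕ))) ^ m * (Q ^ (k ^ 2)) ^ (m ^ 2) := by
    simp only [← zpow_natCast, ← zpow_mul, ← zpow_add₀ hQ0]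
    push_cast
    ring_nf
  change z ^ (m * k + r : ℤ) * Q ^ ((m * k + r : ℤ) ^ 2) = _
  rw [hz', hQ', mul_zpow]
  ring

end ThetaSeries

/-- Ramanujan's theta function `φ(-x) = ∑_{m ∈ ℤ} (-1) ^ m x ^ (m ^ 2)`. -/
noncomputable def phiNeg {𝕜 : Type*} [Field 𝕜] [TopologicalSpace 𝕜] (x : 𝕜) : 𝕜 :=
  thetaSeries (-1) x

/-- The cubic continued fraction as a function of `x = q ^ (1 / 3)`, a variable in which it is
single-valued. -/
noncomputable def cubicFraction {𝕜 : Type*} [Field 𝕜] [TopologicalSpace 𝕜] (x : 𝕜) : 𝕜 :=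
  x * (qPochhammerInf (x ^ 3) (x ^ 18) * qPochhammerInf (x ^ 15) (x ^ 18)) /
    qPochhammerInf (x ^ 9) (x ^ 18) ^ 2

section CubicFraction

lemma cubicFraction_mul_of_pow_three_eq_one {𝕜 : Type*} [Field 𝕜] [TopologicalSpace 𝕜] {w : 𝕜}
    (hw : w ^ 3 = 1) (x : 𝕜) : cubicFraction (w * x) = w * cubicFraction x := by
  have hpow (k : ℕ) : (w * x) ^ (3 * k) = x ^ (3 * k) := by
    rw [mul_pow, pow_mul, hw, one_pow, one_mul]
  simp only [cubicFraction, hpow 1, hpow 3, hpow 5, hpow 6]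
  ring

variable {𝕜 : Type*} [NormedField 𝕜] [CompleteSpace 𝕜] {w x : 𝕜}

lemma phiNeg_eq_mul_sq (hx : ‖x‖ < 1) :
    phiNeg x = qPochhammerInf (x ^ 2) (x ^ 2) * qPochhammerInf x (x ^ 2) ^ 2 := by
  rw [phiNeg, jacobi_triple_product (neg_ne_zero.mpr one_ne_zero) hx]
  simp [sq]

lemma phiNeg_mul_qPochhammerInf_sq (hx : ‖x‖ < 1) :
    phiNeg x * qPochhammerInf (x ^ 2) (x ^ 2) = qPochhammerInf x x ^ 2 := by
  rw [phiNeg_eq_mul_sq hx, qPochhammerInf_eq_prod_range x hx two_ne_zero, prod_range_succ,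
    prod_range_one, pow_zero, mul_one, pow_one, ← sq]
  ring

lemma phiNeg_ne_zero (hx : ‖x‖ < 1) : phiNeg x ≠ 0 :=
  left_ne_zero_of_mul <|
    phiNeg_mul_qPochhammerInf_sq hx ▸ pow_ne_zero 2 (qPochhammerInf_ne_zero hx hx)

theorem prod_range_phiNeg_rotation {p : ℕ} (hp : p.Prime) (hp2 : p ≠ 2)
    (hw : IsPrimitiveRoot w p) (hx : ‖x‖ < 1) :
    (∏ j ∈ range p, phiNeg (w ^ j * x)) * phiNeg (x ^ p ^ 2) = phiNeg (x ^ p) ^ (p + 1) := by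
  have hx2 := norm_pow_lt_one hx two_ne_zero
  have hw2 : IsPrimitiveRoot (w ^ 2) p :=
    hw.pow_of_coprime 2 ((Nat.coprime_primes Nat.prime_two hp).mpr hp2.symm)
  have hrot := prod_range_qPochhammerInf_rotation hp hw hx
  have hrot2 := prod_range_qPochhammerInf_rotation hp hw2 hx2
  have hprod : (∏ j ∈ range p, phiNeg (w ^ j * x)) *
      ∏ j ∈ range p, qPochhammerInf ((w ^ 2) ^ j * x ^ 2) ((w ^ 2) ^ j * x ^ 2) =
      (∏ j ∈ range p, qPochhammerInf (w ^ j * x) (w ^ j * x)) ^ 2 := by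
    rw [← prod_mul_distrib, ← prod_pow]
    refine prod_congr rfl fun j _ => ?_
    rw [← phiNeg_mul_qPochhammerInf_sq (by rwa [norm_pow_mul_of_isPrimitiveRoot hw hp.ne_zero])]
    ring_nf
  have hp' := phiNeg_mul_qPochhammerInf_sq (norm_pow_lt_one hx hp.ne_zero)
  have hpp := phiNeg_mul_qPochhammerInf_sq (norm_pow_lt_one hx (pow_ne_zero 2 hp.ne_zero))
  rw [pow_right_comm] at hp' hpp
  have hne := qPochhammerInf_ne_zero (norm_pow_lt_one hx2 hp.ne_zero)
    (norm_pow_lt_one hx2 hp.ne_zero)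
  refine mul_right_cancel₀ (pow_ne_zero (p + 1) hne) ?_
  calc _ = ((∏ j ∈ range p, phiNeg (w ^ j * x)) *
          ∏ j ∈ range p, qPochhammerInf ((w ^ 2) ^ j * x ^ 2) ((w ^ 2) ^ j * x ^ 2)) *
        (phiNeg (x ^ p ^ 2) * qPochhammerInf ((x ^ 2) ^ p ^ 2) ((x ^ 2) ^ p ^ 2)) := by
        rw [← hrot2]
        ring
    _ = ((∏ j ∈ range p, qPochhammerInf (w ^ j * x) (w ^ j * x)) *
        qPochhammerInf (x ^ p ^ 2) (x ^ p ^ 2)) ^ 2 := by rw [hprod, hpp, mul_pow]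
    _ = (phiNeg (x ^ p) * qPochhammerInf ((x ^ 2) ^ p) ((x ^ 2) ^ p)) ^ (p + 1) := by
        rw [hrot, hp', pow_right_comm]
    _ = _ := mul_pow _ _ _

lemma phiNeg_eq_phiNeg_pow_nine_sub (hx0 : x ≠ 0) (hx : ‖x‖ < 1) :
    phiNeg x = phiNeg (x ^ 9) - 2 * x * thetaSeries (-x ^ 6) (x ^ 9) := by
  have hreflect : x ^ 3 * thetaSeries (-x ^ 12) (x ^ 9) = -thetaSeries (-x ^ 6) (x ^ 9) := by
    have hx6 : -x ^ 6 ≠ 0 := neg_ne_zero.mpr (pow_ne_zero 6 hx0)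
    have harg : -x ^ 12 = (-x ^ 6)⁻¹ * (x ^ 9) ^ 2 := by
      field_simp
    rw [harg, thetaSeries_mul_sq (inv_ne_zero hx6) (pow_ne_zero 9 hx0), thetaSeries_inv]
    field_simp
  have hdissect : phiNeg x = phiNeg (x ^ 9) - x * thetaSeries (-x ^ 6) (x ^ 9) +
      x ^ 4 * thetaSeries (-x ^ 12) (x ^ 9) := by
    rw [phiNeg, thetaSeries_eq_sum_range (neg_ne_zero.mpr one_ne_zero) hx0 hx three_ne_zero]
    norm_num [sum_range_succ, phiNeg, sub_eq_add_neg]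
  linear_combination hdissect + x * hreflect

theorem phiNeg_eq_phiNeg_pow_nine_mul (hx : ‖x‖ < 1) :
    phiNeg x = phiNeg (x ^ 9) * (1 - 2 * cubicFraction x) := by
  obtain rfl | hx0 := eq_or_ne x 0
  · simp [cubicFraction]
  have hx9 := norm_pow_lt_one hx (by norm_num : 9 ≠ 0)
  have hne : qPochhammerInf (x ^ 9) (x ^ 18) ≠ 0 :=
    qPochhammerInf_ne_zero hx9 (norm_pow_lt_one hx (by norm_num))
  have htheta : thetaSeries (-x ^ 6) (x ^ 9) = qPochhammerInf (x ^ 18) (x ^ 18) *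
      (qPochhammerInf (x ^ 15) (x ^ 18) * qPochhammerInf (x ^ 3) (x ^ 18)) := by
    have hinv : -((-x ^ 6)⁻¹ * x ^ 9) = x ^ 3 := by
      field_simp
    rw [jacobi_triple_product (neg_ne_zero.mpr (pow_ne_zero 6 hx0)) hx9, hinv]
    ring_nf
  rw [phiNeg_eq_phiNeg_pow_nine_sub hx0 hx, phiNeg_eq_mul_sq hx9, ← pow_mul, htheta,
    cubicFraction]
  field_simp

theorem phiNeg_pow_three_pow_four (hw : IsPrimitiveRoot w 3) (hx : ‖x‖ < 1) :
    phiNeg (x ^ 3) ^ 4 = phiNeg (x ^ 9) ^ 4 * (1 - 8 * cubicFraction x ^ 3) := by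
  have hfactor (j : ℕ) : phiNeg (w ^ j * x) =
      phiNeg (x ^ 9) * (1 - w ^ j * (2 * cubicFraction x)) := by
    have hroot : (w ^ j) ^ 3 = 1 := by rw [pow_right_comm, hw.pow_eq_one, one_pow]
    rw [phiNeg_eq_phiNeg_pow_nine_mul
      (by rwa [norm_pow_mul_of_isPrimitiveRoot hw three_ne_zero]),
      cubicFraction_mul_of_pow_three_eq_one hroot, mul_pow, pow_mul _ 3 3, hroot,
      one_pow, one_mul, mul_left_comm]
  have hrot := prod_range_phiNeg_rotation Nat.prime_three (by norm_num) hw hx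
  simp_rw [hfactor] at hrot
  rw [prod_mul_distrib, prod_const, card_range,
    prod_range_one_sub_pow_mul three_ne_zero hw] at hrot
  linear_combination -hrot

end CubicFraction

lemma cubicFraction_eq_tprod {𝕜 : Type*} [NormedField 𝕜] [CompleteSpace 𝕜] {x : 𝕜}
    (hx : ‖x‖ < 1) :
    cubicFraction x = x * ∏' n : ℕ,
      ((1 - (x ^ 3) ^ (6 * (n + 1) - 1)) * (1 - (x ^ 3) ^ (6 * (n + 1) - 5)) /
        (1 - (x ^ 3) ^ (6 * (n + 1) - 3)) ^ 2) := by
  have hq := norm_pow_lt_one hx (by norm_num : 18 ≠ 0)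
  have hfactor {b s : ℕ} (h : s < 6) (hb : b + 3 * s = 18) (n : ℕ) :
      1 - (x ^ 3) ^ (6 * (n + 1) - s) = 1 - x ^ b * (x ^ 18) ^ n := by
    rw [← pow_mul, ← pow_mul, ← pow_add]
    congr 2
    lia
  have hmul (b : ℕ) := (multipliable_one_sub_mul_pow (x ^ b) hq).hasProd
  simp_rw [hfactor (b := 15) (s := 1) (by lia) (by lia),
    hfactor (b := 3) (s := 5) (by lia) (by lia), hfactor (b := 9) (s := 3) (by lia) (by lia), sq]
  rw [(((hmul 15).mul (hmul 3)).div₀ ((hmul 9).mul (hmul 9)) ?_).tprod_eq, mul_div_assoc', ← sq]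
  · simp only [cubicFraction, qPochhammerInf]
    ring
  · have hne := qPochhammerInf_ne_zero (norm_pow_lt_one hx (by norm_num : 9 ≠ 0)) hq
    exact mul_ne_zero hne hne

lemma qParam_natCast_mul (h : ℝ) (n : ℕ) (z : ℂ) :
    Function.Periodic.qParam h (n * z) = Function.Periodic.qParam h z ^ n := by
  rw [Function.Periodic.qParam, Function.Periodic.qParam, ← exp_nat_mul]
  ring_nf

lemma c_eq_cubicFraction {τ : ℂ} (hτ : 0 < τ.im) :
    c τ = cubicFraction (Function.Periodic.qParam 3 τ) := by
  have hnome : nome τ = Function.Periodic.qParam 3 τ ^ 3 := by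
    rw [← qParam_natCast_mul, nome, Function.Periodic.qParam]
    push_cast
    ring_nf
  rw [cubicFraction_eq_tprod (Function.Periodic.norm_qParam_lt_one three_pos hτ), ← hnome, c,
    Function.Periodic.qParam, ofReal_ofNat]

lemma c_three_mul_eq_cubicFraction {τ : ℂ} (hτ : 0 < τ.im) :
    c (3 * τ) = cubicFraction (Function.Periodic.qParam 3 τ ^ 3) := by
  rw [c_eq_cubicFraction (by simpa using hτ), ← qParam_natCast_mul, Nat.cast_ofNat]

theorem cubicCF_triplication_general {𝕜 : Type*} [NormedField 𝕜] [CompleteSpace 𝕜] {w x : 𝕜}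
    (h2 : (2 : 𝕜) ≠ 0) (hw : IsPrimitiveRoot w 3) (hx : ‖x‖ < 1) :
    cubicFraction x ^ 3 * (4 * cubicFraction (x ^ 3) ^ 2 + 2 * cubicFraction (x ^ 3) + 1) -
      cubicFraction (x ^ 3) * (cubicFraction (x ^ 3) ^ 2 - cubicFraction (x ^ 3) + 1) = 0 := by
  have hx3 := norm_pow_lt_one hx three_ne_zero
  have hφ := phiNeg_eq_phiNeg_pow_nine_mul hx3
  have hφx := phiNeg_pow_three_pow_four hw hx
  have hφx3 := phiNeg_pow_three_pow_four hw hx3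
  rw [← pow_mul] at hφx3
  have h27 : phiNeg ((x ^ 3) ^ 9) ≠ 0 := phiNeg_ne_zero (norm_pow_lt_one hx3 (by norm_num))
  have hv : 1 - 2 * cubicFraction (x ^ 3) ≠ 0 := right_ne_zero_of_mul (hφ ▸ phiNeg_ne_zero hx3)
  rw [hφ, hφx3] at hφx
  refine (mul_eq_zero_iff_left
    (mul_ne_zero (mul_ne_zero (pow_ne_zero 4 h27) hv) (pow_ne_zero 3 h2))).mp ?_
  linear_combination hφx

/-- For `τ` in the upper half-plane, `x = c(τ)` and `y = c(3τ)` satisfy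
`g(x,y) = x³(4y² + 2y + 1) − y(y² − y + 1) = 0`. -/
theorem cubicCF_triplication (τ : ℂ) (hτ : 0 < τ.im) :
    c τ ^ 3 * (4 * c (3 * τ) ^ 2 + 2 * c (3 * τ) + 1) -
      c (3 * τ) * (c (3 * τ) ^ 2 - c (3 * τ) + 1) = 0 := by
  rw [c_eq_cubicFraction hτ, c_three_mul_eq_cubicFraction hτ]
  exact cubicCF_triplication_general two_ne_zero (isPrimitiveRoot_exp 3 three_ne_zero)
    (Function.Periodic.norm_qParam_lt_one three_pos hτ)
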